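/- (Corollary C, cosine version) Let μ ≥ 1 be an odd integer, j ∈ ℕ, and ϑ, φ ∈ [0,π] with cos ϑ + cos φ > 0. Set a = sin ϑ/(cos ϑ + cos φ) and b = sin φ/(cos ϑ + cos φ). Then ∫₀^∞ L_j^μ(2x) J̃_{μ/2}(ax) cos(bx) x^μ e^{−x} dx = (−1)^j · (2^μ/√π) · ((cos ϑ + cos φ)/2)^{(μ+1)/2} · cos((j+(μ+1)/2)φ) · C̃_j^{(μ+1)/2}(cos ϑ). -/

import Mathlib

open MeasureTheory Real Filter Set Metric

noncomputable section

/-- Normalized Bessel function of the first kind: `J̃_α(x) = (x/2)^{-α} J_α(x)`,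
given by its (entire) power series. -/
def besselJt (α x : ℝ) : ℝ :=
  ∑' m : ℕ, (-1) ^ m / (m.factorial * Real.Gamma (m + α + 1)) * (x / 2) ^ (2 * m)

/-- Bessel function of the first kind `J_α`. -/
def besselJ (α x : ℝ) : ℝ :=
  ∑' m : ℕ, (-1) ^ m / (m.factorial * Real.Gamma (m + α + 1)) * (x / 2) ^ (2 * (m : ℝ) + α)

/-- Normalized modified Bessel function `Ĩ_α(x) = (x/2)^{-α} I_α(x)`,
given by its (entire, even) power series. -/
def besselIt (α x : ℝ) : ℝ :=
  ∑' m : ℕ, (x / 2) ^ (2 * m) / (m.factorial * Real.Gamma (m + α + 1))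

/-- Modified Bessel function of the first kind `I_α`. -/
def besselI (α x : ℝ) : ℝ :=
  ∑' m : ℕ, (x / 2) ^ (2 * (m : ℝ) + α) / (m.factorial * Real.Gamma (m + α + 1))

/-- Modified Bessel function of the second kind,
`K_α(x) = lim_{β→α} (π/2)(I_{−β}(x) − I_β(x))/sin(βπ)`. -/
def besselK (α x : ℝ) : ℝ :=
  limUnder (nhdsWithin α {α}ᶜ) fun β =>
    Real.pi / 2 * (besselI (-β) x - besselI β x) / Real.sin (β * Real.pi)

/-- Normalized K-Bessel function `K̃_α(x) = (x/2)^{-α} K_α(x)`. -/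
def besselKt (α x : ℝ) : ℝ := (x / 2) ^ (-α) * besselK α x

/-- Normalized Gegenbauer polynomial `C̃_n^λ = Γ(λ) C_n^λ`, where `C_n^λ` is defined via the
generating function `(1 − 2xt + t²)^{−λ} = Σ_{n≥0} C_n^λ(x) tⁿ`; explicitly,
`C̃_n^λ(x) = Σ_{k=0}^{⌊n/2⌋} (−1)^k Γ(λ+n−k)/(k!(n−2k)!) (2x)^{n−2k}`.
This expression also gives the limit value `C̃_n^0 = lim_{λ→0+} Γ(λ) C_n^λ` for `n ≥ 1`. -/
def gegenbauerCt (n : ℕ) (l x : ℝ) : ℝ :=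
  ∑ k ∈ Finset.range (n / 2 + 1),
    (-1) ^ k * Real.Gamma (l + n - k) / (k.factorial * (n - 2 * k).factorial)
      * (2 * x) ^ (n - 2 * k)

/-- Laguerre polynomial `L_n^μ(x) = Σ_{k=0}^n (−1)^k binom(n+μ, n−k) x^k/k!`
(with nonnegative integer parameter `μ`). -/
def laguerreL (n μ : ℕ) (x : ℝ) : ℝ :=
  ∑ k ∈ Finset.range (n + 1),
    (-1) ^ k * (Nat.choose (n + μ) (n - k)) * x ^ k / k.factorial

/-- The Euler operator `θ = x d/dx`. -/
def eulerOp (u : ℝ → ℝ) : ℝ → ℝ := fun x => x * deriv u x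

/-- `(θ+c)(θ+c+ν)u − x² u`, i.e. the operator `Q_ν(θ+c)` applied to `u`. -/
def besselQ (ν c : ℝ) (u : ℝ → ℝ) : ℝ → ℝ := fun x =>
  eulerOp (fun y => eulerOp u y + (c + ν) * u y) x
    + c * (eulerOp u x + (c + ν) * u x) - x ^ 2 * u x

/-- The fourth order differential operator
`D_{μ,ν} = x^{−2}((θ+μ)(θ+μ+ν) − x²)(θ(θ+ν) − x²)`. -/
def Dop (μ ν : ℝ) (u : ℝ → ℝ) : ℝ → ℝ := fun x =>
  besselQ ν μ (besselQ ν 0 u) x / x ^ 2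

/-- The generating function
`G^{μ,ν}(t,x) = (1−t)^{−(μ+ν+2)/2} Ĩ_{μ/2}(tx/(1−t)) K̃_{ν/2}(x/(1−t))`. -/
def genFun (μ ν t x : ℝ) : ℝ :=
  (1 - t) ^ (-(μ + ν + 2) / 2) * besselIt (μ / 2) (t * x / (1 - t))
    * besselKt (ν / 2) (x / (1 - t))

/-- The eigenfunctions `Λ_j^{μ,ν}`, defined as the Taylor coefficients in `t` at `t = 0` of the
generating function `G^{μ,ν}(t,x) = Σ_{j≥0} Λ_j^{μ,ν}(x) t^j`. -/
def LambdaF (μ ν : ℝ) (j : ℕ) (x : ℝ) : ℝ :=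
  iteratedDeriv j (fun t => genFun μ ν t x) 0 / j.factorial

/-- The integrality condition: `μ ≥ ν ≥ −1` are integers of the same parity,
not both equal to `−1`. -/
def IntCond (μ ν : ℤ) : Prop :=
  -1 ≤ ν ∧ ν ≤ μ ∧ Even (μ - ν) ∧ ¬(μ = -1 ∧ ν = -1)

end

/-!
The Laplace transform of `x^(2α) J̃_α(ax)` at `q` is `4^α Γ(α + 1/2) / √π · (q² + a²)^(-(α + 1/2))`:
for real `q > |a|` this is the binomial series, integrated term by term, and both sides are analytic
on `0 < Re q`. Take `α = μ / 2` and `q = 1 - ib`. Summing over `j` against the Laguerre generating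
function replaces `q` by `q + 2t / (1 - t)` and multiplies by `(1 - t)^(-(μ + 1))`. For the given
`a` and `b`, with `s = cos ϑ + cos φ` and `τ = -exp(iφ) t`,
`(1 - t)² ((q + 2t / (1 - t))² + a²) = (2 / s) exp(-iφ) (1 - 2 τ cos ϑ + τ²)`,
so the resulting function of `t` is a Gegenbauer generating function in `τ`. Comparing the
coefficients of `t^j` and taking real parts gives the formula.
-/

section PowerSeries

variable {E : Type*} [AddCommGroup E] [UniformSpace E] [IsUniformAddGroup E] [CompleteSpace E]
  [T2Space E]

lemma hasSum_sum_range_of_hasSum_prod {c : ℕ} (hc : 0 < c) {g : ℕ × ℕ → E} {S : E}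
    (hg : HasSum g S) :
    HasSum (fun j => ∑ k ∈ Finset.range (j / c + 1), g (k, j - c * k)) S := by
  convert hg.tsum_fiberwise (fun p : ℕ × ℕ => p.2 + c * p.1) with j
  have hfiber : (fun p : ℕ × ℕ => p.2 + c * p.1) ⁻¹' {j}
      = ((Finset.range (j / c + 1)).image (fun k => (k, j - c * k)) : Finset (ℕ × ℕ)) := by
    ext ⟨k, m⟩
    simp only [Set.mem_preimage, Set.mem_singleton_iff, Finset.coe_image, Set.mem_image,
      Finset.coe_range, Set.mem_Iio, Prod.mk.injEq, Order.lt_add_one_iff,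
      Nat.le_div_iff_mul_le hc, mul_comm _ c]
    constructor
    · intro h
      exact ⟨k, by omega, rfl, by omega⟩
    · rintro ⟨k', hk, rfl, rfl⟩
      omega
  rw [hfiber, Finset.tsum_subtype', Finset.sum_image fun _ _ _ _ h => (Prod.ext_iff.1 h).1]

end PowerSeries

lemma eq_of_eventually_hasSum_mul_pow {𝕜 : Type*} [NontriviallyNormedField 𝕜] {u v : ℕ → 𝕜}
    {F : 𝕜 → 𝕜} (hu : ∀ᶠ t in nhds 0, HasSum (fun j => u j * t ^ j) (F t))
    (hv : ∀ᶠ t in nhds 0, HasSum (fun j => v j * t ^ j) (F t)) : u = v := by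
  have hasFPowerSeriesAt {w : ℕ → 𝕜}
      (hw : ∀ᶠ t in nhds 0, HasSum (fun j => w j * t ^ j) (F t)) :
      HasFPowerSeriesAt F (FormalMultilinearSeries.ofScalars 𝕜 w) 0 := by
    rw [hasFPowerSeriesAt_iff]
    filter_upwards [hw] with t ht
    simpa only [FormalMultilinearSeries.coeff_ofScalars, smul_eq_mul, zero_add, mul_comm] using ht
  have h := (hasFPowerSeriesAt hu).eq_formalMultilinearSeries (hasFPowerSeriesAt hv)
  ext j
  simpa only [FormalMultilinearSeries.coeff_ofScalars] using congrArg (·.coeff j) h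

lemma choose_add_natCast_sub_one_eq_Gamma_div (l : ℂ) (hl : 0 < l.re) (n : ℕ) :
    Ring.choose (l + n - 1) n = Complex.Gamma (l + n) / (n.factorial * Complex.Gamma l) := by
  have hpole (k : ℕ) : l ≠ -k := fun h => by
    have := congrArg Complex.re h
    rw [Complex.neg_re, Complex.natCast_re] at this
    linarith [Nat.cast_nonneg (α := ℝ) k]
  have hpoch := Ring.factorial_nsmul_multichoose_eq_ascPochhammer l n
  rw [Polynomial.ascPochhammer_smeval_eq_eval, ← Complex.Gamma_add_nat_div_Gamma_eq l hpole,
    Ring.multichoose_eq, nsmul_eq_mul] at hpoch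
  field_simp [Complex.Gamma_ne_zero_of_re_pos hl, n.factorial_ne_zero] at hpoch ⊢
  linear_combination hpoch

lemma hasSum_Gamma_mul_pow {l : ℝ} (hl : 0 < l) {z : ℂ} (hz : ‖z‖ < 1) :
    HasSum (fun n : ℕ => (Real.Gamma (l + n) : ℂ) / n.factorial * z ^ n)
      (Real.Gamma l * (1 - z) ^ (-l : ℂ)) := by
  have h := ((Complex.one_div_one_sub_cpow_hasFPowerSeriesOnBall_zero l).hasSum
    (y := z) (by simpa [← ofReal_norm, Metric.mem_eball] using hz)).mul_left (Complex.Gamma l)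
  rw [zero_add, one_div, ← Complex.cpow_neg, Complex.Gamma_ofReal] at h
  refine h.congr_fun fun n => ?_
  rw [FormalMultilinearSeries.ofScalars_apply_eq,
    choose_add_natCast_sub_one_eq_Gamma_div _ (by simpa), smul_eq_mul]
  push_cast [← Complex.Gamma_ofReal]
  have : Complex.Gamma l ≠ 0 := Complex.Gamma_ne_zero_of_re_pos (by simpa)
  field_simp

lemma sum_range_div_factorial_mul_pow {𝕜 : Type*} [Field 𝕜] [CharZero 𝕜] (c z w : 𝕜) (n : ℕ) :
    ∑ k ∈ Finset.range (n + 1), c / (k.factorial * (n - k).factorial) * z ^ k * w ^ (n - k)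
      = c / n.factorial * (z + w) ^ n := by
  rw [add_pow, Finset.mul_sum]
  refine Finset.sum_congr rfl fun k hk => ?_
  rw [Nat.cast_choose 𝕜 (Finset.mem_range_succ_iff.mp hk)]
  have hn : (n.factorial : 𝕜) ≠ 0 := mod_cast n.factorial_ne_zero
  field_simp

lemma summable_Gamma_mul_pow_mul_pow {l a b : ℝ} (hl : 0 < l) (ha : 0 ≤ a) (hb : 0 ≤ b)
    (hab : a + b < 1) :
    Summable fun p : ℕ × ℕ =>
      Real.Gamma (l + p.1 + p.2) / (p.1.factorial * p.2.factorial) * a ^ p.1 * b ^ p.2 := by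
  have hnonneg (p : ℕ × ℕ) : 0 ≤
      Real.Gamma (l + p.1 + p.2) / (p.1.factorial * p.2.factorial) * a ^ p.1 * b ^ p.2 := by
    have := Real.Gamma_pos_of_pos (show 0 < l + p.1 + p.2 by positivity)
    positivity
  refine Finset.HasAntidiagonal.sigmaAntidiagonalEquivProd.summable_iff.mp
    ((summable_sigma_of_nonneg fun _ => hnonneg _).mpr ⟨fun n => .of_finite, ?_⟩)
  have h := (hasSum_Gamma_mul_pow hl (z := a + b)
    (by rwa [← Complex.ofReal_add, Complex.norm_of_nonneg (by positivity)])).summable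
  norm_cast at h
  refine h.congr fun n => ?_
  simp only [Finset.HasAntidiagonal.sigmaAntidiagonalEquivProd_apply]
  rw [← sum_range_div_factorial_mul_pow, tsum_fintype, Finset.sum_coe_sort _ (fun p : ℕ × ℕ =>
    Real.Gamma (l + p.1 + p.2) / (p.1.factorial * p.2.factorial) * a ^ p.1 * b ^ p.2),
    Finset.Nat.sum_antidiagonal_eq_sum_range_succ_mk]
  refine Finset.sum_congr rfl fun k hk => ?_
  rw [Nat.cast_sub (Finset.mem_range_succ_iff.mp hk), add_assoc l, add_sub_cancel]

lemma hasSum_Gamma_mul_pow_mul_pow {l : ℝ} (hl : 0 < l) {z w : ℂ} (hzw : ‖z‖ + ‖w‖ < 1) :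
    HasSum (fun p : ℕ × ℕ =>
        (Real.Gamma (l + p.1 + p.2) : ℂ) / (p.1.factorial * p.2.factorial) * z ^ p.1 * w ^ p.2)
      (Real.Gamma l * (1 - (z + w)) ^ (-l : ℂ)) := by
  have hsummable : Summable fun p : ℕ × ℕ =>
      (Real.Gamma (l + p.1 + p.2) : ℂ) / (p.1.factorial * p.2.factorial) * z ^ p.1 * w ^ p.2 := by
    refine .of_norm ((summable_Gamma_mul_pow_mul_pow hl (norm_nonneg z) (norm_nonneg w)
      hzw).congr fun p => ?_)
    simp only [norm_mul, norm_div, norm_pow, Complex.norm_natCast]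
    rw [Complex.norm_of_nonneg (Real.Gamma_pos_of_pos (by positivity)).le]
  have h := (hasSum_sum_range_of_hasSum_prod one_pos hsummable.hasSum).congr_fun
    (g := fun n : ℕ => (Real.Gamma (l + n) : ℂ) / n.factorial * (z + w) ^ n) fun n => ?_
  · rw [← h.unique (hasSum_Gamma_mul_pow hl ((norm_add_le z w).trans_lt hzw))]
    exact hsummable.hasSum
  · rw [← sum_range_div_factorial_mul_pow, Nat.div_one]
    refine Finset.sum_congr rfl fun k hk => ?_
    rw [one_mul, Nat.cast_sub (Finset.mem_range_succ_iff.mp hk), add_assoc l, add_sub_cancel]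

lemma hasSum_gegenbauerCt_mul_pow {l : ℝ} (hl : 0 < l) (y : ℝ) {t : ℂ}
    (ht : 2 * |y| * ‖t‖ + ‖t‖ ^ 2 < 1) :
    HasSum (fun j => (gegenbauerCt j l y : ℂ) * t ^ j)
      (Real.Gamma l * (1 - 2 * y * t + t ^ 2) ^ (-l : ℂ)) := by
  have h := hasSum_sum_range_of_hasSum_prod two_pos
    (hasSum_Gamma_mul_pow_mul_pow hl (z := -t ^ 2) (w := 2 * y * t)
      (by simpa [add_comm] using ht))
  rw [show 1 - (-t ^ 2 + 2 * y * t) = 1 - 2 * y * t + t ^ 2 by ring] at h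
  refine h.congr_fun fun j => ?_
  rw [gegenbauerCt, Complex.ofReal_sum, Finset.sum_mul]
  refine Finset.sum_congr rfl fun k hk => ?_
  obtain ⟨m, rfl⟩ := Nat.exists_eq_add_of_le (show 2 * k ≤ j by grind)
  rw [Nat.add_sub_cancel_left,
    show l + (2 * k + m : ℕ) - k = l + k + m by push_cast; ring, neg_pow, mul_pow, pow_add, pow_mul]
  push_cast
  ring

lemma eventually_hasSum_gegenbauerCt_mul_pow {l : ℝ} (hl : 0 < l) (y : ℝ) :
    ∀ᶠ t : ℂ in nhds 0, HasSum (fun j => (gegenbauerCt j l y : ℂ) * t ^ j)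
      (Real.Gamma l * (1 - 2 * y * t + t ^ 2) ^ (-l : ℂ)) := by
  have hsmall : Tendsto (fun t : ℂ => 2 * |y| * ‖t‖ + ‖t‖ ^ 2) (nhds 0) (nhds 0) :=
    Continuous.tendsto' (by fun_prop) _ _ (by simp)
  filter_upwards [hsmall.eventually_lt_const one_pos] with t ht
  exact hasSum_gegenbauerCt_mul_pow hl y ht

lemma hasSum_choose_mul_pow (μ k : ℕ) {𝕜 : Type*} [RCLike 𝕜] (z : 𝕜) {t : 𝕜} (ht : ‖t‖ < 1) :
    HasSum (fun m : ℕ => z ^ k / k.factorial * ((m + (k + μ)).choose (k + μ) : 𝕜) * t ^ m)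
      (1 / (1 - t) ^ (μ + 1) * ((z / (1 - t)) ^ k / k.factorial)) := by
  have h := (hasSum_choose_mul_geometric_of_norm_lt_one (k + μ) ht).mul_left (z ^ k / k.factorial)
  rw [show k + μ + 1 = (μ + 1) + k by ring, pow_add] at h
  rw [show 1 / (1 - t) ^ (μ + 1) * ((z / (1 - t)) ^ k / k.factorial) =
    z ^ k / k.factorial * (1 / ((1 - t) ^ (μ + 1) * (1 - t) ^ k)) by rw [div_pow]; field_simp]
  exact h.congr_fun fun m => mul_assoc _ _ _

lemma hasSum_choose_mul_pow_mul_pow (μ : ℕ) (z : ℂ) {t : ℂ} (ht : ‖t‖ < 1) :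
    HasSum (fun p : ℕ × ℕ =>
        z ^ p.1 / p.1.factorial * ((p.2 + (p.1 + μ)).choose (p.1 + μ) : ℂ) * t ^ p.2)
      (1 / (1 - t) ^ (μ + 1) * Complex.exp (z / (1 - t))) := by
  have hsum : HasSum (fun k : ℕ => 1 / (1 - t) ^ (μ + 1) * ((z / (1 - t)) ^ k / k.factorial))
      (1 / (1 - t) ^ (μ + 1) * Complex.exp (z / (1 - t))) := by
    rw [Complex.exp_eq_exp_ℂ]
    exact (NormedSpace.expSeries_div_hasSum_exp (z / (1 - t))).mul_left (1 / (1 - t) ^ (μ + 1))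
  have hsummable : Summable fun p : ℕ × ℕ =>
      z ^ p.1 / p.1.factorial * ((p.2 + (p.1 + μ)).choose (p.1 + μ) : ℂ) * t ^ p.2 := by
    have h (k : ℕ) := hasSum_choose_mul_pow μ k ‖z‖ (t := ‖t‖) (by rwa [norm_norm])
    refine .of_norm ((summable_prod_of_nonneg fun _ => norm_nonneg _).mpr ⟨fun k => ?_, ?_⟩) <;>
      simp only [norm_mul, norm_div, norm_pow, Complex.norm_natCast]
    · exact (h k).summable
    · simp only [fun k => (h k).tsum_eq]
      exact (Real.summable_pow_div_factorial _).mul_left _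
  have h := hsummable.hasSum.prod_fiberwise fun k => hasSum_choose_mul_pow μ k z ht
  exact h.unique hsum ▸ hsummable.hasSum

lemma hasSum_laguerreL_mul_pow (μ : ℕ) (x : ℝ) {t : ℂ} (ht : ‖t‖ < 1) :
    HasSum (fun j => (laguerreL j μ x : ℂ) * t ^ j)
      (1 / (1 - t) ^ (μ + 1) * Complex.exp (-(x * t / (1 - t)))) := by
  have h := hasSum_sum_range_of_hasSum_prod one_pos (hasSum_choose_mul_pow_mul_pow μ (-(x * t)) ht)
  rw [neg_div] at h
  refine h.congr_fun fun j => ?_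
  rw [laguerreL, Nat.div_one, Complex.ofReal_sum, Finset.sum_mul]
  refine Finset.sum_congr rfl fun k hk => ?_
  obtain ⟨m, rfl⟩ := Nat.exists_eq_add_of_le (Finset.mem_range_succ_iff.mp hk)
  rw [one_mul, Nat.add_sub_cancel_left, show k + m + μ = m + (k + μ) by ring, Nat.choose_symm_add]
  push_cast
  rw [neg_pow (_ * _), mul_pow, pow_add]
  ring

lemma hasSum_laguerreL_mul_pow_real (μ : ℕ) (x : ℝ) {t : ℝ} (ht : |t| < 1) :
    HasSum (fun j => laguerreL j μ x * t ^ j)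
      (1 / (1 - t) ^ (μ + 1) * Real.exp (-(x * t / (1 - t)))) := by
  have h := hasSum_laguerreL_mul_pow μ x (t := t) (by simpa using ht)
  exact_mod_cast h

lemma abs_laguerreL_le (j μ : ℕ) {x : ℝ} (hx : 0 ≤ x) : |laguerreL j μ x| ≤ laguerreL j μ (-x) := by
  refine (Finset.abs_sum_le_sum_abs _ _).trans_eq (Finset.sum_congr rfl fun k _ => ?_)
  have hsign : (-1 : ℝ) ^ k * (-1) ^ k = 1 := by rw [← mul_pow]; norm_num
  rw [abs_div, abs_mul, abs_mul, abs_pow, abs_neg, abs_one, one_pow, abs_pow, abs_of_nonneg hx,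
    Nat.abs_cast, Nat.abs_cast, neg_pow x]
  linear_combination (-((j + μ).choose (j - k) : ℝ) * x ^ k / k.factorial) * hsign

section BesselClifford

/-- The Bessel–Clifford function `C_α(z) = Σ z^m / (m! Γ(m + α + 1))`, with `1 / Γ = 0` at the poles
of `Γ`. It satisfies `C_α' = C_{α + 1}` and carries the normalized Bessel function:
`J̃_α(x) = C_α(-(x / 2) ^ 2)`. -/
noncomputable def besselClifford (α z : ℝ) : ℝ :=
  ∑' m : ℕ, z ^ m / (m.factorial * Real.Gamma (m + α + 1))

lemma besselJt_eq_besselClifford (α x : ℝ) : besselJt α x = besselClifford α (-(x / 2) ^ 2) := by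
  refine tsum_congr fun m => ?_
  rw [neg_pow (_ ^ 2), pow_mul]
  ring

lemma hasSum_besselClifford (α z : ℝ) :
    HasSum (fun m : ℕ => z ^ m / (m.factorial * Real.Gamma (m + α + 1))) (besselClifford α z) := by
  refine (Summable.of_norm_bounded_eventually_nat
    (Real.summable_pow_div_factorial |z|) ?_).hasSum
  filter_upwards [tendsto_natCast_atTop_atTop.eventually_ge_atTop (1 - α)] with m hm
  have one_le_Gamma : 1 ≤ Real.Gamma (m + α + 1) :=
    Real.Gamma_two.symm.le.trans <| Real.Gamma_strictMonoOn_Ici.monotoneOn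
      (mem_Ici.mpr le_rfl) (mem_Ici.mpr (by linarith)) (by linarith)
  rw [norm_div, norm_mul, norm_pow, Real.norm_natCast, Real.norm_eq_abs,
    Real.norm_of_nonneg (zero_le_one.trans one_le_Gamma)]
  gcongr
  exact le_mul_of_one_le_right (by positivity) one_le_Gamma

lemma besselClifford_zero (α : ℝ) : besselClifford α 0 = 1 / Real.Gamma (α + 1) := by
  rw [besselClifford, tsum_eq_single 0 fun m hm => by rw [zero_pow hm, zero_div]]
  simp

lemma hasSum_natCast_mul_pow_div (α z : ℝ) :
    HasSum (fun m : ℕ => m * z ^ (m - 1) / (m.factorial * Real.Gamma (m + α + 1)))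
      (besselClifford (α + 1) z) := by
  rw [← hasSum_nat_add_iff' 1]
  simp only [Finset.sum_range_one, Nat.cast_zero, zero_mul, zero_div, sub_zero]
  refine (hasSum_besselClifford (α + 1) z).congr_fun fun m => ?_
  rw [Nat.add_sub_cancel, Nat.factorial_succ, show ((m + 1 : ℕ) : ℝ) + α + 1 = m + (α + 1) + 1 by
    push_cast; ring]
  push_cast
  have : (m : ℝ) + 1 ≠ 0 := by positivity
  field_simp

lemma hasDerivAt_besselClifford (α z : ℝ) :
    HasDerivAt (besselClifford α) (besselClifford (α + 1) z) z := by
  have hz : z ∈ Metric.ball (0 : ℝ) (|z| + 1) := by simp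
  rw [← (hasSum_natCast_mul_pow_div α z).tsum_eq]
  refine hasDerivAt_tsum_of_isPreconnected (hasSum_natCast_mul_pow_div α (|z| + 1)).summable.norm
    Metric.isOpen_ball (convex_ball _ _).isPreconnected
    (fun m y _ => (hasDerivAt_pow m y).div_const _) (fun m y hy => ?_) hz
    (hasSum_besselClifford α z).summable hz
  rw [mem_ball_zero_iff] at hy
  simp only [norm_div, norm_mul, norm_pow]
  gcongr
  exact hy.le.trans (le_abs_self _)

lemma inv_Gamma_eq_mul_inv_Gamma_add_one (s : ℝ) :
    (Real.Gamma s)⁻¹ = s * (Real.Gamma (s + 1))⁻¹ := by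
  rcases eq_or_ne s 0 with rfl | hs
  · rw [Real.Gamma_zero, inv_zero, zero_mul]
  · rw [Real.Gamma_add_one hs, mul_inv, mul_inv_cancel_left₀ hs]

lemma besselClifford_recurrence (α z : ℝ) :
    z * besselClifford (α + 2) z + (α + 1) * besselClifford (α + 1) z = besselClifford α z := by
  have h := ((hasSum_natCast_mul_pow_div (α + 1) z).mul_left z).add
    ((hasSum_besselClifford (α + 1) z).mul_left (α + 1))
  rw [show α + 1 + 1 = α + 2 by ring] at h
  refine (h.congr_fun fun m => ?_).unique (hasSum_besselClifford α z)
  have hpow : z * (m * z ^ (m - 1)) = m * z ^ m := by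
    cases m with
    | zero => simp
    | succ m => rw [Nat.add_sub_cancel, pow_succ]; ring
  have hΓ := inv_Gamma_eq_mul_inv_Gamma_add_one (m + α + 1)
  rw [show (m : ℝ) + (α + 1) + 1 = m + α + 1 + 1 by ring, div_eq_mul_inv _ (_ * Real.Gamma _),
    mul_inv, hΓ, ← mul_div_assoc, hpow]
  ring

lemma antitone_besselClifford_energy {α : ℝ} (hα : -(1 / 2) ≤ α) :
    Antitone fun z => besselClifford α (-z) ^ 2 + z * besselClifford (α + 1) (-z) ^ 2 := by
  have hderiv (α z : ℝ) : HasDerivAt (fun z => besselClifford α (-z))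
      (-besselClifford (α + 1) (-z)) z := by
    simpa only [mul_neg_one] using! (hasDerivAt_besselClifford α (-z)).comp z (hasDerivAt_neg z)
  refine antitone_of_hasDerivAt_nonpos
    (fun z => ((hderiv α z).pow 2).add ((hasDerivAt_id z).mul ((hderiv (α + 1) z).pow 2)))
    fun z => ?_
  have hrec := besselClifford_recurrence α (-z)
  rw [show α + 1 + 1 = α + 2 by ring]
  calc _ = -(2 * α + 1) * besselClifford (α + 1) (-z) ^ 2 := by
        push_cast
        simp only [id]
        linear_combination 2 * besselClifford (α + 1) (-z) * hrec
    _ ≤ 0 := by nlinarith [sq_nonneg (besselClifford (α + 1) (-z))]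

lemma abs_besselJt_le {α : ℝ} (hα : -(1 / 2) ≤ α) (x : ℝ) :
    |besselJt α x| ≤ 1 / Real.Gamma (α + 1) := by
  have hE := antitone_besselClifford_energy hα (sq_nonneg (x / 2))
  have hΓ : 0 < Real.Gamma (α + 1) := Real.Gamma_pos_of_pos (by linarith)
  simp only [neg_zero, zero_mul, add_zero, besselClifford_zero] at hE
  rw [besselJt_eq_besselClifford]
  exact abs_le_of_sq_le_sq (by nlinarith [mul_nonneg (sq_nonneg (x / 2)) (sq_nonneg
    (besselClifford (α + 1) (-(x / 2) ^ 2)))]) (by positivity)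

lemma continuous_besselJt (α : ℝ) : Continuous (besselJt α) := by
  rw [funext (besselJt_eq_besselClifford α)]
  exact (continuous_iff_continuousAt.mpr fun z => (hasDerivAt_besselClifford α z).continuousAt).comp
    (by fun_prop)

end BesselClifford

section Laplace

/-- The Laplace transform of a real-valued function on the positive half-line. -/
noncomputable def laplaceTransform (f : ℝ → ℝ) (q : ℂ) : ℂ :=
  ∫ x in Ioi 0, f x * Complex.exp (-(q * x))

/-- The Laplace integral of `f` converges absolutely on the whole half-plane `0 < Re q`. -/
def LaplaceConvergent (f : ℝ → ℝ) : Prop :=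
  ∀ r > 0, IntegrableOn (fun x => f x * Real.exp (-(r * x))) (Ioi 0)

lemma norm_ofReal_mul_cexp (c : ℝ) (q : ℂ) (x : ℝ) :
    ‖c * Complex.exp (-(q * x))‖ = |c| * Real.exp (-(q.re * x)) := by
  rw [norm_mul, Complex.norm_real, Real.norm_eq_abs, Complex.norm_exp, Complex.neg_re,
    Complex.re_mul_ofReal]

namespace LaplaceConvergent

variable {f : ℝ → ℝ}

lemma aestronglyMeasurable (hf : LaplaceConvergent f) :
    AEStronglyMeasurable f (volume.restrict (Ioi 0)) := by
  refine ((hf 1 one_pos).aestronglyMeasurable.mul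
    (by fun_prop : Continuous fun x => Real.exp (1 * x)).aestronglyMeasurable).congr
    (.of_forall fun x => ?_)
  simp only [Pi.mul_apply]
  rw [mul_assoc, ← Real.exp_add, neg_add_cancel, Real.exp_zero, mul_one]

lemma integrableOn_abs (hf : LaplaceConvergent f) {r : ℝ} (hr : 0 < r) :
    IntegrableOn (fun x => |f x| * Real.exp (-(r * x))) (Ioi 0) := by
  refine (hf r hr).norm.congr (.of_forall fun x => ?_)
  simp only [norm_mul, Real.norm_eq_abs, Real.abs_exp]

lemma integrableOn_mul_cexp (hf : LaplaceConvergent f) {q : ℂ} (hq : 0 < q.re) :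
    IntegrableOn (fun x => f x * Complex.exp (-(q * x))) (Ioi 0) :=
  (hf.integrableOn_abs hq).mono'
    ((Complex.continuous_ofReal.comp_aestronglyMeasurable hf.aestronglyMeasurable).mul
      (by fun_prop : Continuous fun x : ℝ => Complex.exp (-(q * x))).aestronglyMeasurable)
    (.of_forall fun x => (norm_ofReal_mul_cexp _ q x).le)

lemma id_mul (hf : LaplaceConvergent f) : LaplaceConvergent fun x => x * f x := by
  intro r hr
  refine ((hf.integrableOn_abs (half_pos hr)).const_mul (2 / r)).mono'
    ((aestronglyMeasurable_id.mul hf.aestronglyMeasurable).mul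
      (by fun_prop : Continuous fun x => Real.exp (-(r * x))).aestronglyMeasurable) ?_
  filter_upwards [ae_restrict_mem measurableSet_Ioi] with x hx
  have hx_le : x ≤ 2 / r * Real.exp (r / 2 * x) := by
    rw [div_mul_eq_mul_div, le_div_iff₀ hr]
    linarith [Real.add_one_le_exp (r / 2 * x)]
  calc ‖x * f x * Real.exp (-(r * x))‖ = x * (|f x| * Real.exp (-(r * x))) := by
        rw [norm_mul, norm_mul, Real.norm_of_nonneg (mem_Ioi.mp hx).le, Real.norm_eq_abs,
          Real.norm_eq_abs, Real.abs_exp, mul_assoc]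
    _ ≤ 2 / r * Real.exp (r / 2 * x) * (|f x| * Real.exp (-(r * x))) := by gcongr
    _ = 2 / r * (|f x| * Real.exp (-(r / 2 * x))) := by
        rw [show -(r / 2 * x) = r / 2 * x + -(r * x) by ring, Real.exp_add]
        ring

protected lemma pow_mul (hf : LaplaceConvergent f) : ∀ k : ℕ, LaplaceConvergent fun x => x ^ k * f x
  | 0 => by simpa using hf
  | k + 1 => by simpa only [pow_succ', mul_assoc] using (hf.pow_mul k).id_mul

lemma laguerreL_mul (hf : LaplaceConvergent f) (j μ : ℕ) (s : ℝ) :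
    LaplaceConvergent fun x => laguerreL j μ (s * x) * f x := by
  intro r hr
  simp only [laguerreL, Finset.sum_mul]
  refine integrable_finsetSum _ fun k _ => ?_
  refine ((hf.pow_mul k r hr).const_mul
    ((-1) ^ k * (j + μ).choose (j - k) * s ^ k / k.factorial)).congr (.of_forall fun x => ?_)
  simp only [mul_pow]
  ring

lemma hasDerivAt_laplaceTransform (hf : LaplaceConvergent f) {q : ℂ} (hq : 0 < q.re) :
    HasDerivAt (laplaceTransform f) (-laplaceTransform (fun x => x * f x) q) q := by
  have hnhds : {p : ℂ | q.re / 2 < p.re} ∈ nhds q :=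
    (isOpen_lt continuous_const Complex.continuous_re).mem_nhds (half_lt_self hq)
  have h := hasDerivAt_integral_of_dominated_loc_of_deriv_le (μ := volume.restrict (Ioi 0)) hnhds
    (F := fun p x => f x * Complex.exp (-(p * x)))
    (F' := fun p x => -((x * f x : ℝ) * Complex.exp (-(p * x))))
    (bound := fun x => |x * f x| * Real.exp (-(q.re / 2 * x)))
    ?_ (hf.integrableOn_mul_cexp hq) (hf.id_mul.integrableOn_mul_cexp hq).neg.aestronglyMeasurable
    ?_ (hf.id_mul.integrableOn_abs (half_pos hq)) ?_
  · rw [integral_neg] at h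
    exact h.2
  · filter_upwards [hnhds] with p hp
    exact (hf.integrableOn_mul_cexp ((half_pos hq).trans hp)).aestronglyMeasurable
  · filter_upwards [ae_restrict_mem measurableSet_Ioi] with x hx p hp
    rw [norm_neg, norm_ofReal_mul_cexp]
    gcongr
    exact (mem_Ioi.mp hx).le
  · refine .of_forall fun x p _ => ?_
    convert! (((hasDerivAt_id p).mul_const (x : ℂ)).neg.cexp).const_mul (f x : ℂ) using 1
    push_cast
    simp only [Pi.neg_apply, id]
    ring

lemma re_laplaceTransform (hf : LaplaceConvergent f) {q : ℂ} (hq : 0 < q.re) :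
    (laplaceTransform f q).re =
      ∫ x in Ioi 0, f x * (Real.exp (-(q.re * x)) * Real.cos (q.im * x)) := by
  rw [laplaceTransform, ← RCLike.re_eq_complex_re, ← integral_re (hf.integrableOn_mul_cexp hq)]
  refine integral_congr_ae (.of_forall fun x => ?_)
  simp only [RCLike.re_eq_complex_re, Complex.re_ofReal_mul, Complex.exp_re, Complex.neg_re,
    Complex.neg_im, Complex.re_mul_ofReal, Complex.im_mul_ofReal, Real.cos_neg]

lemma hasSum_laguerreL_mul (hf : LaplaceConvergent f) (μ : ℕ) {s : ℝ} (hs : 0 ≤ s) {q t : ℂ}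
    (ht : ‖t‖ < 1) (hq : s * ‖t‖ / (1 - ‖t‖) < q.re) :
    HasSum (fun j => laplaceTransform (fun x => laguerreL j μ (s * x) * f x) q * t ^ j)
      (1 / (1 - t) ^ (μ + 1) * laplaceTransform f (q + s * t / (1 - t))) := by
  set p := s * ‖t‖ / (1 - ‖t‖)
  have hp : 0 ≤ p := div_nonneg (by positivity) (by linarith)
  have hbound (x : ℝ) : HasSum
      (fun j => laguerreL j μ (-(s * x)) * ‖t‖ ^ j * (|f x| * Real.exp (-(q.re * x))))
      (1 / (1 - ‖t‖) ^ (μ + 1) * (|f x| * Real.exp (-((q.re - p) * x)))) := by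
    rw [show -((q.re - p) * x) = -(-(s * x) * ‖t‖ / (1 - ‖t‖)) + -(q.re * x) by
      simp only [p]; ring, Real.exp_add, mul_left_comm |f x|, ← mul_assoc]
    exact (hasSum_laguerreL_mul_pow_real μ (-(s * x)) (by rwa [abs_norm])).mul_right _
  simp only [laplaceTransform, ← integral_mul_const, ← integral_const_mul]
  refine hasSum_integral_of_dominated_convergence
    (fun j x => laguerreL j μ (-(s * x)) * ‖t‖ ^ j * (|f x| * Real.exp (-(q.re * x))))
    (fun j => ?_) (fun j => ?_) (.of_forall fun x => (hbound x).summable) ?_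
    (.of_forall fun x => ?_)
  · exact ((hf.laguerreL_mul j μ s).integrableOn_mul_cexp
      (hp.trans_lt hq)).aestronglyMeasurable.mul_const _
  · filter_upwards [ae_restrict_mem measurableSet_Ioi] with x hx
    rw [norm_mul, norm_ofReal_mul_cexp, abs_mul, norm_pow]
    have := abs_laguerreL_le j μ (mul_nonneg hs (mem_Ioi.mp hx).le)
    calc _ = |laguerreL j μ (s * x)| * ‖t‖ ^ j * (|f x| * Real.exp (-(q.re * x))) := by ring
      _ ≤ _ := by gcongr
  · simp only [fun x => (hbound x).tsum_eq]
    exact (hf.integrableOn_abs (sub_pos.mpr hq)).const_mul _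
  · rw [show -((q + s * t / (1 - t)) * x) = -((s * x : ℝ) * t / (1 - t)) + -(q * x) by
      push_cast; ring, Complex.exp_add, mul_left_comm (f x : ℂ), ← mul_assoc]
    refine ((hasSum_laguerreL_mul_pow μ (s * x) ht).mul_right _).congr_fun fun j => ?_
    push_cast
    ring

lemma eventually_hasSum_laguerreL_mul (hf : LaplaceConvergent f) (μ : ℕ) {s : ℝ} (hs : 0 ≤ s)
    {q : ℂ} (hq : 0 < q.re) :
    ∀ᶠ t : ℂ in nhds 0,
      HasSum (fun j => laplaceTransform (fun x => laguerreL j μ (s * x) * f x) q * t ^ j)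
        (1 / (1 - t) ^ (μ + 1) * laplaceTransform f (q + s * t / (1 - t))) := by
  have hshift : Tendsto (fun t : ℂ => s * ‖t‖ / (1 - ‖t‖)) (nhds 0) (nhds 0) := by
    have : ContinuousAt (fun t : ℂ => s * ‖t‖ / (1 - ‖t‖)) 0 := by fun_prop (disch := simp)
    simpa using this.tendsto
  filter_upwards [tendsto_norm_zero.eventually_lt_const one_pos, hshift.eventually_lt_const hq]
    with t ht htq
  exact hf.hasSum_laguerreL_mul μ hs ht htq

end LaplaceConvergent

end Laplace

section BesselLaplace

variable {α : ℝ}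

lemma laplaceConvergent_rpow_mul_besselJt (hα : -(1 / 2) < α) (a : ℝ) :
    LaplaceConvergent fun x => x ^ (2 * α) * besselJt α (a * x) := by
  intro r hr
  have h := (integrableOn_rpow_mul_exp_neg_mul_rpow (s := 2 * α) (by linarith) one_pos hr).bdd_mul
    (c := 1 / Real.Gamma (α + 1))
    ((continuous_besselJt α).comp (continuous_const_mul a)).aestronglyMeasurable
    (.of_forall fun x => abs_besselJt_le hα.le (a * x))
  refine h.congr (.of_forall fun x => ?_)
  simp only [Function.comp_apply, Real.rpow_one, neg_mul]
  ring

lemma Gamma_two_mul_add_natCast (α : ℝ) (m : ℕ) :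
    Real.Gamma (2 * (α + 1 / 2 + m)) =
      4 ^ α * 4 ^ m / √π * Real.Gamma (α + 1 / 2 + m) * Real.Gamma (m + α + 1) := by
  have h := Real.Gamma_mul_Gamma_add_half (α + 1 / 2 + m)
  have hpow : (2 : ℝ) ^ (1 - 2 * (α + 1 / 2 + m)) = (4 ^ α * 4 ^ m)⁻¹ := by
    rw [← Real.rpow_natCast 4 m, ← Real.rpow_add four_pos, ← Real.rpow_neg four_pos.le,
      show (4 : ℝ) = 2 ^ (2 : ℝ) by norm_num, ← Real.rpow_mul zero_le_two]
    congr 1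
    ring
  rw [show α + 1 / 2 + m + 1 / 2 = m + α + 1 by ring, hpow] at h
  rw [mul_assoc, h]
  have : (4 : ℝ) ^ α ≠ 0 := (Real.rpow_pos_of_pos four_pos α).ne'
  field_simp

lemma rpow_mul_pow_div_mul_exp_eq {x : ℝ} (hx : 0 < x) (α r z : ℝ) (m : ℕ) :
    x ^ (2 * α) * ((z * x ^ 2) ^ m / (m.factorial * Real.Gamma (m + α + 1)))
        * Real.exp (-(r * x))
      = z ^ m / (m.factorial * Real.Gamma (m + α + 1)) *
        (x ^ (2 * (α + 1 / 2 + m) - 1) * Real.exp (-(r * x))) := by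
  rw [show 2 * (α + 1 / 2 + m) - 1 = 2 * α + (2 * m : ℕ) by push_cast; ring,
    Real.rpow_add hx, Real.rpow_natCast, mul_pow, ← pow_mul]
  ring

lemma integrableOn_rpow_mul_pow_div_mul_exp (hα : -(1 / 2) < α) {r : ℝ} (hr : 0 < r) (z : ℝ)
    (m : ℕ) :
    IntegrableOn (fun x => x ^ (2 * α) *
      ((z * x ^ 2) ^ m / (m.factorial * Real.Gamma (m + α + 1))) * Real.exp (-(r * x)))
      (Ioi 0) := by
  have h := integrableOn_rpow_mul_exp_neg_mul_rpow (s := 2 * (α + 1 / 2 + m) - 1)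
    (by linarith [Nat.cast_nonneg (α := ℝ) m]) one_pos hr
  refine (h.const_mul (z ^ m / (m.factorial * Real.Gamma (m + α + 1)))).congr ?_
  filter_upwards [ae_restrict_mem measurableSet_Ioi] with x hx
  rw [rpow_mul_pow_div_mul_exp_eq hx, Real.rpow_one, neg_mul]

lemma integral_rpow_mul_pow_div_mul_exp (hα : -(1 / 2) < α) {r : ℝ} (hr : 0 < r) (z : ℝ) (m : ℕ) :
    ∫ x in Ioi 0, x ^ (2 * α) * ((z * x ^ 2) ^ m / (m.factorial * Real.Gamma (m + α + 1)))
        * Real.exp (-(r * x))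
      = 4 ^ α / √π * r ^ (-(2 * α + 1)) *
        (Real.Gamma (α + 1 / 2 + m) / m.factorial * (4 * z / r ^ 2) ^ m) := by
  have : (0 : ℝ) ≤ m := m.cast_nonneg
  have hΓ : Real.Gamma (m + α + 1) ≠ 0 := (Real.Gamma_pos_of_pos (by linarith)).ne'
  have hpow : (1 / r) ^ (2 * (α + 1 / 2 + m)) = r ^ (-(2 * α + 1)) / (r ^ 2) ^ m := by
    rw [one_div, Real.inv_rpow hr.le, ← Real.rpow_neg hr.le, ← pow_mul, ← Real.rpow_natCast r,
      ← Real.rpow_sub hr]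
    congr 1
    push_cast
    ring
  rw [setIntegral_congr_fun measurableSet_Ioi fun x hx => rpow_mul_pow_div_mul_exp_eq hx α r z m,
    integral_const_mul, Real.integral_rpow_mul_exp_neg_mul_Ioi (by linarith) hr,
    Gamma_two_mul_add_natCast, hpow, div_pow, mul_pow]
  field_simp

lemma summable_integral_norm_rpow_mul_pow_div_mul_exp (hα : -(1 / 2) < α) {r z : ℝ} (hr : 0 < r)
    (hz : ‖(4 * z / r ^ 2 : ℂ)‖ < 1) :
    Summable fun m : ℕ => ∫ x in Ioi 0, ‖x ^ (2 * α) *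
      ((z * x ^ 2) ^ m / (m.factorial * Real.Gamma (m + α + 1))) * Real.exp (-(r * x))‖ := by
  have hsum := (hasSum_Gamma_mul_pow (l := α + 1 / 2) (by linarith) hz).summable.norm.mul_left
    (4 ^ α / √π * r ^ (-(2 * α + 1)))
  refine hsum.congr fun m => ?_
  have : (0 : ℝ) ≤ m := m.cast_nonneg
  have hnorm : ‖(4 * z / r ^ 2 : ℂ)‖ = 4 * |z| / r ^ 2 := by
    simp [abs_of_pos hr]
  rw [norm_mul, norm_div, norm_pow, Complex.norm_natCast, Complex.norm_real,
    Real.norm_of_nonneg (Real.Gamma_pos_of_pos (by linarith)).le, hnorm,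
    ← integral_rpow_mul_pow_div_mul_exp hα hr |z| m]
  refine setIntegral_congr_fun measurableSet_Ioi fun x hx => ?_
  have hΓ : 0 < Real.Gamma (m + α + 1) := Real.Gamma_pos_of_pos (by linarith)
  simp only [norm_mul, norm_div, norm_pow, Real.norm_eq_abs, Real.abs_exp, Nat.abs_cast,
    abs_of_pos hΓ, abs_of_pos (Real.rpow_pos_of_pos (mem_Ioi.mp hx) _), abs_of_pos (mem_Ioi.mp hx)]

lemma laplaceTransform_rpow_mul_besselClifford_ofReal (hα : -(1 / 2) < α) {r z : ℝ} (hr : 0 < r)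
    (hz : ‖(4 * z / r ^ 2 : ℂ)‖ < 1) :
    laplaceTransform (fun x => x ^ (2 * α) * besselClifford α (z * x ^ 2)) r =
      (4 ^ α / √π * Real.Gamma (α + 1 / 2) * r ^ (-(2 * α + 1)) : ℝ) *
        (1 - 4 * z / r ^ 2 : ℂ) ^ (-(α + 1 / 2 : ℝ) : ℂ) := by
  have hseries (x : ℝ) : x ^ (2 * α) * besselClifford α (z * x ^ 2) * Real.exp (-(r * x)) =
      ∑' m : ℕ, x ^ (2 * α) * ((z * x ^ 2) ^ m / (m.factorial * Real.Gamma (m + α + 1)))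
        * Real.exp (-(r * x)) := by
    rw [tsum_mul_right, tsum_mul_left, besselClifford]
  have hintegral : HasSum
      (fun m : ℕ => 4 ^ α / √π * r ^ (-(2 * α + 1)) *
        (Real.Gamma (α + 1 / 2 + m) / m.factorial * (4 * z / r ^ 2) ^ m))
      (∫ x in Ioi 0, x ^ (2 * α) * besselClifford α (z * x ^ 2) * Real.exp (-(r * x))) := by
    simp only [hseries, ← integral_rpow_mul_pow_div_mul_exp hα hr]
    exact hasSum_integral_of_summable_integral_norm
      (fun m => integrableOn_rpow_mul_pow_div_mul_exp hα hr z m)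
      (summable_integral_norm_rpow_mul_pow_div_mul_exp hα hr hz)
  have hbinomial := (hasSum_Gamma_mul_pow (l := α + 1 / 2) (by linarith) hz).mul_left
    ((4 ^ α / √π * r ^ (-(2 * α + 1)) : ℝ) : ℂ)
  have h := (Complex.hasSum_ofReal.mpr hintegral).unique (hbinomial.congr_fun fun m => by
    push_cast; ring)
  rw [← integral_complex_ofReal] at h
  simp only [laplaceTransform]
  push_cast at h ⊢
  rw [h]
  ring

lemma laplaceTransform_rpow_mul_besselJt_ofReal (hα : -(1 / 2) < α) {a r : ℝ} (hr : |a| < r) :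
    laplaceTransform (fun x => x ^ (2 * α) * besselJt α (a * x)) r =
      (4 ^ α / √π * Real.Gamma (α + 1 / 2) : ℝ) *
        ((r : ℂ) ^ 2 + a ^ 2) ^ (-(α + 1 / 2 : ℝ) : ℂ) := by
  have hr₀ : 0 < r := (abs_nonneg a).trans_lt hr
  have hr' : (r : ℂ) ≠ 0 := Complex.ofReal_ne_zero.mpr hr₀.ne'
  have hratio : (4 * (-(a / 2) ^ 2 : ℝ) / r ^ 2 : ℂ) = -(a / r) ^ 2 := by
    push_cast
    ring
  have hsmall : ‖(4 * (-(a / 2) ^ 2 : ℝ) / r ^ 2 : ℂ)‖ < 1 := by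
    rw [hratio, norm_neg, norm_pow, norm_div, Complex.norm_real, Complex.norm_real,
      Real.norm_eq_abs, Real.norm_of_nonneg hr₀.le]
    exact pow_lt_one₀ (by positivity) ((div_lt_one hr₀).mpr hr) two_ne_zero
  have h := laplaceTransform_rpow_mul_besselClifford_ofReal hα hr₀ hsmall
  have hsplit : ((r : ℂ) ^ 2 + a ^ 2) = (r ^ 2 : ℝ) * (1 + (a / r) ^ 2 : ℝ) := by
    push_cast
    field_simp
  have hbessel : (fun x => x ^ (2 * α) * besselJt α (a * x)) =
      fun x => x ^ (2 * α) * besselClifford α (-(a / 2) ^ 2 * x ^ 2) := by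
    ext x
    rw [besselJt_eq_besselClifford, show -(a * x / 2) ^ 2 = -(a / 2) ^ 2 * x ^ 2 by ring]
  have hpow : ((r ^ 2 : ℝ) : ℂ) ^ (-(α + 1 / 2 : ℝ) : ℂ) = (r ^ (-(2 * α + 1)) : ℝ) := by
    rw [← Complex.ofReal_neg, ← Complex.ofReal_cpow (sq_nonneg r), ← Real.rpow_natCast,
      ← Real.rpow_mul hr₀.le]
    congr 2
    push_cast
    ring
  rw [hbessel, h, hratio, hsplit, Complex.mul_cpow_ofReal_nonneg (by positivity) (by positivity),
    hpow, sub_neg_eq_add]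
  push_cast
  ring

lemma sq_add_ofReal_sq_mem_slitPlane (a : ℝ) {q : ℂ} (hq : 0 < q.re) :
    q ^ 2 + a ^ 2 ∈ Complex.slitPlane := by
  have hre : (q ^ 2 + a ^ 2).re = q.re ^ 2 - q.im ^ 2 + a ^ 2 := by
    simp [sq]
  have him : (q ^ 2 + a ^ 2).im = 2 * q.re * q.im := by
    simp [sq]
    ring
  rw [Complex.mem_slitPlane_iff, hre, him]
  rcases eq_or_ne q.im 0 with h | h
  · left
    rw [h, zero_pow two_ne_zero, sub_zero]
    positivity
  · right
    positivity

lemma laplaceTransform_rpow_mul_besselJt (hα : -(1 / 2) < α) (a : ℝ) {q : ℂ} (hq : 0 < q.re) :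
    laplaceTransform (fun x => x ^ (2 * α) * besselJt α (a * x)) q =
      (4 ^ α / √π * Real.Gamma (α + 1 / 2) : ℝ) * (q ^ 2 + a ^ 2) ^ (-(α + 1 / 2 : ℝ) : ℂ) := by
  have hopen : IsOpen {q : ℂ | 0 < q.re} := isOpen_lt continuous_const Complex.continuous_re
  have hleft : AnalyticOnNhd ℂ
      (laplaceTransform fun x => x ^ (2 * α) * besselJt α (a * x)) {q | 0 < q.re} :=
    DifferentiableOn.analyticOnNhd (fun p hp => ((laplaceConvergent_rpow_mul_besselJt hα
      a).hasDerivAt_laplaceTransform hp).differentiableAt.differentiableWithinAt) hopen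
  have hright : AnalyticOnNhd ℂ (fun q : ℂ => (4 ^ α / √π * Real.Gamma (α + 1 / 2) : ℝ) *
      (q ^ 2 + a ^ 2 : ℂ) ^ (-(α + 1 / 2 : ℝ) : ℂ)) {q | 0 < q.re} :=
    DifferentiableOn.analyticOnNhd (fun p hp =>
      (((by fun_prop : DifferentiableAt ℂ (fun q : ℂ => q ^ 2 + (a : ℂ) ^ 2) p).cpow_const
        (sq_add_ofReal_sq_mem_slitPlane a hp)).const_mul _).differentiableWithinAt) hopen
  have hreal : Tendsto (fun r : ℝ => (r : ℂ)) (nhdsWithin (|a| + 1) {|a| + 1}ᶜ)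
      (nhdsWithin ((|a| + 1 : ℝ) : ℂ) {((|a| + 1 : ℝ) : ℂ)}ᶜ) :=
    Complex.continuous_ofReal.continuousWithinAt.tendsto_nhdsWithin fun r hr =>
      Complex.ofReal_injective.ne hr
  refine hleft.eqOn_of_preconnected_of_frequently_eq hright
    (convex_halfSpace_re_gt 0).isPreconnected (z₀ := ((|a| + 1 : ℝ) : ℂ)) ?_
    (hreal.frequently (Eventually.frequently ?_)) hq
  · rw [mem_ofPred_eq, Complex.ofReal_re]
    positivity
  · filter_upwards [nhdsWithin_le_nhds (lt_mem_nhds (lt_add_one |a|))] with r hr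
    exact laplaceTransform_rpow_mul_besselJt_ofReal hα hr

end BesselLaplace

section Cpow

lemma eventually_mul_cpow_eq {β : Type*} {l : Filter β} {f g : β → ℂ} {v : ℂ}
    (hf : Tendsto f l (nhds 1)) (hg : Tendsto g l (nhds v)) (hv : v ∈ Complex.slitPlane) (c : ℂ) :
    ∀ᶠ x in l, (f x * g x) ^ c = f x ^ c * g x ^ c := by
  have harg : Tendsto (fun x => (f x).arg + (g x).arg) l (nhds v.arg) := by
    simpa using (((Complex.continuousAt_arg Complex.one_mem_slitPlane).tendsto.comp hf).add
      ((Complex.continuousAt_arg hv).tendsto.comp hg))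
  have hv_arg : v.arg ∈ Ioo (-π) π :=
    ⟨Complex.neg_pi_lt_arg v,
      (Complex.arg_le_pi v).lt_of_ne (Complex.mem_slitPlane_iff_arg.mp hv).1⟩
  filter_upwards [hf.eventually_ne one_ne_zero, hg.eventually_ne (Complex.slitPlane_ne_zero hv),
    harg (isOpen_Ioo.mem_nhds hv_arg)] with x hfx hgx hx
  rw [Complex.cpow_def_of_ne_zero (mul_ne_zero hfx hgx), Complex.cpow_def_of_ne_zero hfx,
    Complex.cpow_def_of_ne_zero hgx, Complex.log_mul hfx hgx (Ioo_subset_Ioc_self hx), add_mul,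
    Complex.exp_add]

lemma ofReal_mul_cexp_mul_I_cpow {r : ℝ} (hr : 0 < r) {θ : ℝ} (hθ : θ ∈ Ioc (-π) π) (c : ℂ) :
    (r * Complex.exp (θ * Complex.I)) ^ c = r ^ c * Complex.exp (θ * Complex.I * c) := by
  have hr' : (r : ℂ) ≠ 0 := Complex.ofReal_ne_zero.mpr hr.ne'
  rw [Complex.cpow_def_of_ne_zero (mul_ne_zero hr' (Complex.exp_ne_zero _)),
    Complex.cpow_def_of_ne_zero hr', Complex.log_ofReal_mul hr (Complex.exp_ne_zero _),
    Complex.log_exp (by simpa using hθ.1) (by simpa using hθ.2), add_mul, Complex.exp_add,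
    Complex.ofReal_log hr.le]

lemma inv_mul_cexp_neg_cpow_neg {r : ℝ} (hr : 0 < r) {θ : ℝ} (hθ : θ ∈ Ioo (-π) π) (l : ℝ) :
    ((r⁻¹ : ℝ) * Complex.exp ((-θ : ℝ) * Complex.I)) ^ (-l : ℂ) =
      (r ^ l : ℝ) * Complex.exp (l * θ * Complex.I) := by
  rw [ofReal_mul_cexp_mul_I_cpow (inv_pos.mpr hr) ⟨neg_lt_neg hθ.2, (neg_lt.mp hθ.1).le⟩,
    ← Complex.ofReal_neg l, ← Complex.ofReal_cpow (inv_pos.mpr hr).le, Real.inv_rpow hr.le,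
    Real.rpow_neg hr.le, inv_inv]
  push_cast
  ring_nf

lemma eventually_cpow_two_mul_mul_cpow_eq {β : Type*} {l : Filter β} {w Q G : β → ℂ} {u : ℂ}
    (hw : Tendsto w l (nhds 1)) (hG : Tendsto G l (nhds 1)) (hQ : Tendsto Q l (nhds u))
    (hu : u ∈ Complex.slitPlane) (h : ∀ᶠ x in l, w x * (w x * Q x) = G x * u) (c : ℂ) :
    ∀ᶠ x in l, w x ^ (2 * c) * Q x ^ c = G x ^ c * u ^ c := by
  have hwQ : Tendsto (fun x => w x * Q x) l (nhds u) := by simpa using hw.mul hQ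
  filter_upwards [h, hw.eventually_ne one_ne_zero, eventually_mul_cpow_eq hw hQ hu c,
    eventually_mul_cpow_eq hw hwQ hu c, eventually_mul_cpow_eq hG tendsto_const_nhds hu c]
    with x hx hwx hwQ hwwQ hGu
  rw [two_mul, Complex.cpow_add _ _ hwx, mul_assoc, ← hwQ, ← hwwQ, hx, hGu]

end Cpow

section GeneratingFunction

variable {ϑ φ : ℝ}

lemma sin_div_sq_sub_sin_div_sq (hpos : 0 < cos ϑ + cos φ) :
    (sin ϑ / (cos ϑ + cos φ)) ^ 2 - (sin φ / (cos ϑ + cos φ)) ^ 2 =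
      (cos φ - cos ϑ) / (cos ϑ + cos φ) := by
  field_simp
  rw [sin_sq, sin_sq]
  ring

lemma one_sub_mul_sq_add_sq (hpos : 0 < cos ϑ + cos φ) {t : ℂ} (ht : 1 - t ≠ 0) :
    (1 - t) * ((1 - t) * ((1 - (sin φ / (cos ϑ + cos φ) : ℝ) * Complex.I +
        (2 : ℝ) * t / (1 - t)) ^ 2 + (sin ϑ / (cos ϑ + cos φ) : ℝ) ^ 2))
      = (1 - 2 * (cos ϑ : ℝ) * (-Complex.exp (φ * Complex.I) * t)
          + (-Complex.exp (φ * Complex.I) * t) ^ 2)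
        * ((2 / (cos ϑ + cos φ) : ℝ) * Complex.exp ((-φ : ℝ) * Complex.I)) := by
  have hs : ((cos ϑ + cos φ : ℝ) : ℂ) ≠ 0 := Complex.ofReal_ne_zero.mpr hpos.ne'
  have hab := congrArg ((↑) : ℝ → ℂ) (sin_div_sq_sub_sin_div_sq hpos)
  have hb : ((sin φ / (cos ϑ + cos φ) : ℝ) : ℂ) = sin φ / (cos ϑ + cos φ : ℝ) := by push_cast; rfl
  have hexp : Complex.exp (φ * Complex.I) = cos φ + sin φ * Complex.I := by
    rw [Complex.exp_mul_I, Complex.ofReal_cos, Complex.ofReal_sin]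
  have hexp_neg : Complex.exp ((-φ : ℝ) * Complex.I) = cos φ - sin φ * Complex.I := by
    rw [Complex.exp_mul_I, ← Complex.ofReal_cos, ← Complex.ofReal_sin, cos_neg, sin_neg]
    push_cast
    ring
  have hmul : Complex.exp (φ * Complex.I) * Complex.exp ((-φ : ℝ) * Complex.I) = 1 := by
    rw [← Complex.exp_add]
    simp
  generalize sin ϑ / (cos ϑ + cos φ) = a at hab ⊢
  generalize sin φ / (cos ϑ + cos φ) = b at hab hb ⊢
  push_cast at hab
  calc _ = (1 + t) ^ 2 - 2 * b * Complex.I * (1 - t ^ 2) + ((a : ℂ) ^ 2 - b ^ 2) * (1 - t) ^ 2 := by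
        push_cast
        field_simp
        linear_combination (b : ℂ) ^ 2 * (1 - t) ^ 2 * Complex.I_sq
    _ = 2 / (cos ϑ + cos φ : ℝ) * (Complex.exp ((-φ : ℝ) * Complex.I) + 2 * cos ϑ * t
          + Complex.exp (φ * Complex.I) * t ^ 2) := by
        rw [hab, hb, hexp, hexp_neg]
        push_cast at hs ⊢
        field_simp
        ring
    _ = _ := by
        push_cast at hmul ⊢
        linear_combination (-2 / (Complex.cos ϑ + Complex.cos φ)) *
          (2 * Complex.cos ϑ * t + Complex.exp (φ * Complex.I) * t ^ 2) * hmul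

lemma mem_Ioo_neg_pi_pi_of_cos_add_cos_pos (hφ : φ ∈ Icc (-π) π) (hpos : 0 < cos ϑ + cos φ) :
    φ ∈ Ioo (-π) π := by
  refine ⟨hφ.1.lt_of_ne' ?_, hφ.2.lt_of_ne ?_⟩ <;>
  · rintro rfl
    simp only [cos_neg, cos_pi] at hpos
    linarith [cos_le_one ϑ]

lemma eventually_inv_one_sub_pow_mul_cpow_eq (hφ : φ ∈ Ioo (-π) π) (hpos : 0 < cos ϑ + cos φ)
    (μ : ℕ) :
    ∀ᶠ t : ℂ in nhds 0,
      1 / (1 - t) ^ (μ + 1) * ((1 - (sin φ / (cos ϑ + cos φ) : ℝ) * Complex.I +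
          (2 : ℝ) * t / (1 - t)) ^ 2 + (sin ϑ / (cos ϑ + cos φ) : ℝ) ^ 2)
            ^ (-(μ / 2 + 1 / 2 : ℝ) : ℂ)
        = (1 - 2 * (cos ϑ : ℝ) * (-Complex.exp (φ * Complex.I) * t)
            + (-Complex.exp (φ * Complex.I) * t) ^ 2) ^ (-(μ / 2 + 1 / 2 : ℝ) : ℂ)
          * ((((cos ϑ + cos φ) / 2) ^ (μ / 2 + 1 / 2 : ℝ) : ℝ)
            * Complex.exp ((μ / 2 + 1 / 2 : ℝ) * φ * Complex.I)) := by
  set s := cos ϑ + cos φ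
  set Q : ℂ → ℂ := fun t =>
    (1 - (sin φ / s : ℝ) * Complex.I + (2 : ℝ) * t / (1 - t)) ^ 2 + (sin ϑ / s : ℝ) ^ 2
  have hQ : Tendsto Q (nhds 0) (nhds (Q 0)) := ContinuousAt.tendsto (by fun_prop (disch := simp))
  have hQ₀ : Q 0 ∈ Complex.slitPlane := sq_add_ofReal_sq_mem_slitPlane _ (by simp)
  have hu : (2 / s : ℝ) * Complex.exp ((-φ : ℝ) * Complex.I) = Q 0 := by
    simpa [Q, s] using (one_sub_mul_sq_add_sq hpos (t := 0) (by simp)).symm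
  have hw : Tendsto (fun t : ℂ => 1 - t) (nhds 0) (nhds 1) :=
    Continuous.tendsto' (by fun_prop) _ _ (by simp)
  filter_upwards [eventually_cpow_two_mul_mul_cpow_eq hw
    (Continuous.tendsto' (by fun_prop) _ _ (by simp)) (hu ▸ hQ) (hu ▸ hQ₀)
    ((hw.eventually_ne one_ne_zero).mono fun t => one_sub_mul_sq_add_sq hpos)
    (-(μ / 2 + 1 / 2 : ℝ) : ℂ)] with t h
  rw [← inv_div (cos ϑ + cos φ) 2, inv_mul_cexp_neg_cpow_neg (half_pos hpos) hφ] at h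
  rw [← h, one_div, ← Complex.cpow_natCast, ← Complex.cpow_neg]
  congr 2
  push_cast
  ring

lemma eventually_hasSum_neg_cexp_mul_gegenbauerCt {l : ℝ} (hl : 0 < l) (y φ : ℝ) :
    ∀ᶠ t : ℂ in nhds 0, HasSum
      (fun j => (-Complex.exp (φ * Complex.I)) ^ j * gegenbauerCt j l y * t ^ j)
      (Real.Gamma l * (1 - 2 * y * (-Complex.exp (φ * Complex.I) * t)
        + (-Complex.exp (φ * Complex.I) * t) ^ 2) ^ (-l : ℂ)) := by
  have hrotate : Tendsto (fun t : ℂ => -Complex.exp (φ * Complex.I) * t) (nhds 0) (nhds 0) :=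
    Continuous.tendsto' (by fun_prop) _ _ (mul_zero _)
  refine (hrotate.eventually (eventually_hasSum_gegenbauerCt_mul_pow hl y)).mono fun t ht =>
    ht.congr_fun fun j => ?_
  rw [mul_pow]
  ring

lemma one_sub_ofReal_mul_I_re (b : ℝ) : (1 - b * Complex.I : ℂ).re = 1 := by simp

lemma one_sub_ofReal_mul_I_im (b : ℝ) : (1 - b * Complex.I : ℂ).im = -b := by simp

lemma laplaceTransform_laguerreL_mul_rpow_mul_besselJt (hφ : φ ∈ Ioo (-π) π)
    (hpos : 0 < cos ϑ + cos φ) (μ j : ℕ) :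
    laplaceTransform (fun x => laguerreL j μ (2 * x) *
        (x ^ (2 * (μ / 2 : ℝ)) * besselJt (μ / 2) (sin ϑ / (cos ϑ + cos φ) * x)))
        (1 - (sin φ / (cos ϑ + cos φ) : ℝ) * Complex.I)
      = ((-1) ^ j * (4 ^ (μ / 2 : ℝ) / √π) * ((cos ϑ + cos φ) / 2) ^ (μ / 2 + 1 / 2 : ℝ)
          * gegenbauerCt j (μ / 2 + 1 / 2) (cos ϑ) : ℝ)
        * Complex.exp (((j + (μ / 2 + 1 / 2)) * φ : ℝ) * Complex.I) := by
  have hα : -(1 / 2) < (μ / 2 : ℝ) := by linarith [Nat.cast_nonneg (α := ℝ) μ]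
  have hre (b : ℝ) : 0 < (1 - b * Complex.I : ℂ).re :=
    (one_sub_ofReal_mul_I_re b).symm ▸ one_pos
  have hlaguerre := (laplaceConvergent_rpow_mul_besselJt hα
    (sin ϑ / (cos ϑ + cos φ))).eventually_hasSum_laguerreL_mul μ zero_le_two
    (hre (sin φ / (cos ϑ + cos φ)))
  have hgegenbauer := eventually_hasSum_neg_cexp_mul_gegenbauerCt
    (by linarith : (0 : ℝ) < μ / 2 + 1 / 2) (cos ϑ) φ
  have hcoeff := eq_of_eventually_hasSum_mul_pow hlaguerre
    (v := fun j => (4 ^ (μ / 2 : ℝ) / √π : ℝ) * (((cos ϑ + cos φ) / 2) ^ (μ / 2 + 1 / 2 : ℝ) : ℝ)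
      * Complex.exp ((μ / 2 + 1 / 2 : ℝ) * φ * Complex.I)
      * ((-Complex.exp (φ * Complex.I)) ^ j * gegenbauerCt j (μ / 2 + 1 / 2) (cos ϑ))) ?_
  · rw [congrFun hcoeff j, show (((j + (μ / 2 + 1 / 2)) * φ : ℝ) * Complex.I : ℂ) =
      j * (φ * Complex.I) + (μ / 2 + 1 / 2 : ℝ) * φ * Complex.I by push_cast; ring,
      Complex.exp_add, Complex.exp_nat_mul, neg_pow (Complex.exp _)]
    push_cast
    ring
  · have hshift (b : ℝ) : ContinuousAt
        (fun t : ℂ => (1 - b * Complex.I + (2 : ℝ) * t / (1 - t)).re) 0 := by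
      fun_prop (disch := simp)
    have hright := (hshift (sin φ / (cos ϑ + cos φ))).eventually_const_lt
      (by simpa using hre (sin φ / (cos ϑ + cos φ)))
    filter_upwards [hgegenbauer, eventually_inv_one_sub_pow_mul_cpow_eq hφ hpos μ, hright]
      with t ht hkernel ht_re
    rw [laplaceTransform_rpow_mul_besselJt hα _ ht_re, mul_left_comm, hkernel]
    convert! ht.mul_left ((4 ^ (μ / 2 : ℝ) / √π : ℝ) *
      (((cos ϑ + cos φ) / 2) ^ (μ / 2 + 1 / 2 : ℝ) : ℝ) *
      Complex.exp ((μ / 2 + 1 / 2 : ℝ) * φ * Complex.I)) using 1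
    · exact funext fun j => mul_assoc _ _ _
    · rw [Complex.ofReal_mul]
      ring

end GeneratingFunction

theorem corollaryC_cos_general (μ j : ℕ) (ϑ φ : ℝ) (hφ : φ ∈ Set.Icc (-Real.pi) Real.pi)
    (hpos : Real.cos ϑ + Real.cos φ > 0) :
    ∫ x in Set.Ioi (0 : ℝ),
        laguerreL j μ (2 * x)
          * besselJt ((μ : ℝ) / 2) (Real.sin ϑ / (Real.cos ϑ + Real.cos φ) * x)
          * Real.cos (Real.sin φ / (Real.cos ϑ + Real.cos φ) * x)
          * x ^ (μ : ℝ) * Real.exp (-x)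
      = (-1) ^ j * ((2 : ℝ) ^ μ / Real.sqrt Real.pi)
          * ((Real.cos ϑ + Real.cos φ) / 2) ^ (((μ : ℝ) + 1) / 2)
          * Real.cos ((j + ((μ : ℝ) + 1) / 2) * φ)
          * gegenbauerCt j (((μ : ℝ) + 1) / 2) (Real.cos ϑ) := by
  have hα : -(1 / 2) < (μ / 2 : ℝ) := by linarith [Nat.cast_nonneg (α := ℝ) μ]
  have hpow : (4 : ℝ) ^ (μ / 2 : ℝ) = 2 ^ μ := by
    rw [show (4 : ℝ) = 2 ^ (2 : ℝ) by norm_num, ← Real.rpow_mul zero_le_two,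
      mul_div_cancel₀ _ two_ne_zero, Real.rpow_natCast]
  have hcomplex := congrArg Complex.re (laplaceTransform_laguerreL_mul_rpow_mul_besselJt
    (mem_Ioo_neg_pi_pi_of_cos_add_cos_pos hφ hpos) hpos μ j)
  rw [((laplaceConvergent_rpow_mul_besselJt hα _).laguerreL_mul j μ 2).re_laplaceTransform
    (by rw [one_sub_ofReal_mul_I_re]; exact one_pos), Complex.re_ofReal_mul,
    Complex.exp_ofReal_mul_I_re, one_sub_ofReal_mul_I_re, one_sub_ofReal_mul_I_im, hpow,
    ← add_div] at hcomplex
  refine Eq.trans (integral_congr_ae (.of_forall fun x => ?_)) (hcomplex.trans (by ring))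
  simp only [mul_div_cancel₀ _ (two_ne_zero' ℝ), one_mul, neg_mul, Real.cos_neg]
  ring

/-- **Corollary C, cosine version.** -/
theorem corollaryC_cos (μ : ℕ) (hμ : Odd μ) (hμ1 : 1 ≤ μ) (j : ℕ)
    (ϑ φ : ℝ) (hϑ : ϑ ∈ Set.Icc (0 : ℝ) Real.pi) (hφ : φ ∈ Set.Icc (0 : ℝ) Real.pi)
    (hpos : Real.cos ϑ + Real.cos φ > 0) :
    ∫ x in Set.Ioi (0 : ℝ),
        laguerreL j μ (2 * x)
          * besselJt ((μ : ℝ) / 2) (Real.sin ϑ / (Real.cos ϑ + Real.cos φ) * x)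
          * Real.cos (Real.sin φ / (Real.cos ϑ + Real.cos φ) * x)
          * x ^ (μ : ℝ) * Real.exp (-x)
      = (-1) ^ j * ((2 : ℝ) ^ μ / Real.sqrt Real.pi)
          * ((Real.cos ϑ + Real.cos φ) / 2) ^ (((μ : ℝ) + 1) / 2)
          * Real.cos ((j + ((μ : ℝ) + 1) / 2) * φ)
          * gegenbauerCt j (((μ : ℝ) + 1) / 2) (Real.cos ϑ) :=
  corollaryC_cos_general μ j ϑ φ ⟨by linarith [hφ.1, Real.pi_pos], hφ.2⟩ hpos
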